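/- Let k ≥ 0 and let q be a real polynomial of degree at most k+1 such that ∫_{-1}^{1} q(x) p(x) dx = 0 for every polynomial p of degree at most k−1. If q(1) = 0, then there exists a real constant c with q = c·(L_{k+1} − L_k); if instead q(−1) = 0, then there exists a real constant c with q = c·(L_{k+1} + L_k). In other words, such a polynomial is a scalar multiple of the right (respectively left) Radau polynomial R_{k+1}^∓. -/

import Mathlib

/-!
The moments `M(n, m) = ∫_{-1}^{1} L_n(x) x^m dx` satisfy
`(m + n + 2) M(n + 1, m) = m M(n, m - 1)`; this follows from the three-term recurrence by
induction on `n` (`legendreMoment_step`). Descending along this relation to `m = 0` gives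
`M(n, m) = 0` for `m < n`, i.e. `L_n` is orthogonal to all polynomials of degree less than `n`.

Since `L_n` has degree exactly `n`, subtracting suitable multiples `a L_{k+1}` and `b L_k` from `q`
leaves a polynomial `r` of degree less than `k`, which is still orthogonal to all polynomials of
degree less than `k`, hence to itself; so `r = 0` and `q = a L_{k+1} + b L_k`.
The values `L_n(1) = 1` and `L_n(-1) = (-1)^n` then turn the boundary condition into
`a + b = 0`, respectively `a = b`.
-/

/-- The Legendre polynomials, defined by the recurrence
`L₀ = 1`, `L₁ = X`, `(k+1) L_{k+1}(x) = (2k+1) x L_k(x) - k L_{k-1}(x)`. -/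
noncomputable def legendre : ℕ → Polynomial ℝ
  | 0 => 1
  | 1 => Polynomial.X
  | (k + 2) =>
      Polynomial.C ((2 * (k : ℝ) + 3) / ((k : ℝ) + 2)) * (Polynomial.X * legendre (k + 1))
        - Polynomial.C (((k : ℝ) + 1) / ((k : ℝ) + 2)) * legendre k

open Polynomial

theorem legendre_rec (k : ℕ) : legendre (k + 2) =
    C ((2 * (k : ℝ) + 3) / ((k : ℝ) + 2)) * (X * legendre (k + 1))
      - C (((k : ℝ) + 1) / ((k : ℝ) + 2)) * legendre k := by
  rw [legendre]

theorem legendre_eval_one (n : ℕ) : (legendre n).eval 1 = 1 := by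
  induction n using Nat.twoStepInduction with
  | zero => simp [legendre]
  | one => simp [legendre]
  | more k h0 h1 =>
    have : (k : ℝ) + 2 ≠ 0 := by positivity
    rw [legendre_rec]
    simp only [eval_sub, eval_mul, eval_C, eval_X, h0, h1]
    field_simp
    ring

theorem legendre_eval_neg_one (n : ℕ) : (legendre n).eval (-1) = (-1) ^ n := by
  induction n using Nat.twoStepInduction with
  | zero => simp [legendre]
  | one => simp [legendre]
  | more k h0 h1 =>
    have : (k : ℝ) + 2 ≠ 0 := by positivity
    rw [legendre_rec]
    simp only [eval_sub, eval_mul, eval_C, eval_X, h0, h1]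
    field_simp
    ring

theorem legendre_natDegree_le (n : ℕ) : (legendre n).natDegree ≤ n := by
  induction n using Nat.twoStepInduction with
  | zero => simp [legendre]
  | one => simp [legendre]
  | more k h0 h1 =>
    rw [legendre_rec]
    refine (natDegree_sub_le _ _).trans (max_le ?_ ?_)
    · refine (natDegree_C_mul_le _ _).trans (natDegree_mul_le.trans ?_)
      rw [natDegree_X]
      omega
    · exact (natDegree_C_mul_le _ _).trans (by omega)

theorem legendre_coeff_pos (n : ℕ) : 0 < (legendre n).coeff n := by
  induction n using Nat.twoStepInduction with
  | zero => simp [legendre]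
  | one => simp [legendre]
  | more k h0 h1 =>
    have hk : (legendre k).coeff (k + 2) = 0 :=
      coeff_eq_zero_of_natDegree_lt (by have := legendre_natDegree_le k; omega)
    rw [legendre_rec, coeff_sub, coeff_C_mul, coeff_C_mul, hk, coeff_X_mul]
    have : 0 < (2 * (k : ℝ) + 3) / ((k : ℝ) + 2) := by positivity
    simpa using mul_pos this h1

/-- The moment `∫_{-1}^{1} L_n(x) x^m dx`. -/
noncomputable def legendreMoment (n m : ℕ) : ℝ :=
  ∫ x in (-1 : ℝ)..1, (legendre n).eval x * x ^ m

theorem legendreMoment_rec (k m : ℕ) :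
    ((k : ℝ) + 2) * legendreMoment (k + 2) m =
      (2 * k + 3) * legendreMoment (k + 1) (m + 1) - (k + 1) * legendreMoment k m := by
  have : (k : ℝ) + 2 ≠ 0 := by positivity
  unfold legendreMoment
  rw [← intervalIntegral.integral_const_mul, ← intervalIntegral.integral_const_mul,
    ← intervalIntegral.integral_const_mul, ← intervalIntegral.integral_sub]
  · congr 1
    ext x
    rw [legendre_rec]
    simp only [eval_sub, eval_mul, eval_C, eval_X]
    field_simp
    ring
  · exact Continuous.intervalIntegrable (by fun_prop) _ _
  · exact Continuous.intervalIntegrable (by fun_prop) _ _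

theorem legendreMoment_one (m : ℕ) : legendreMoment 1 m = legendreMoment 0 (m + 1) := by
  simp [legendreMoment, legendre, pow_succ']

theorem legendreMoment_zero (m : ℕ) :
    ((m : ℝ) + 1) * legendreMoment 0 m = 1 - (-1) ^ (m + 1) := by
  have : (m : ℝ) + 1 ≠ 0 := by positivity
  simp only [legendreMoment, legendre, eval_one, one_mul, integral_pow, one_pow]
  field_simp

/-- The moment relation `(m + n + 2) M(n + 1, m) = m M(n, m - 1)`. For `m = 0` the truncated
index `m - 1` is harmless, its coefficient being zero. -/
theorem legendreMoment_step (n : ℕ) :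
    ∀ m : ℕ, ((m : ℝ) + n + 2) * legendreMoment (n + 1) m = m * legendreMoment n (m - 1) := by
  induction n using Nat.strong_induction_on with
  | _ n ih =>
  rcases n with _ | k
  · rintro (_ | m)
    · have h := legendreMoment_zero 1
      rw [legendreMoment_one]
      norm_num at h ⊢
      exact h
    · have h0 := legendreMoment_zero m
      have h2 := legendreMoment_zero (m + 2)
      rw [legendreMoment_one]
      push_cast at h0 h2 ⊢
      rw [h0]
      ring_nf at h2 ⊢
      exact h2
  · intro m
    -- The relation one level down reduces the claim to `(m - k) M(k, m) = m M(k + 1, m - 1)`.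
    have key : ((m : ℝ) - k) * legendreMoment k m = m * legendreMoment (k + 1) (m - 1) := by
      rcases k with _ | j
      · rcases m with _ | m
        · simp
        · simp [legendreMoment_one]
      · have h := ih j (by omega) m
        rcases m with _ | m
        · have hj : (j : ℝ) + 2 ≠ 0 := by positivity
          have : legendreMoment (j + 1) 0 = 0 := by
            simpa [hj] using h
          simp [this]
        · have hr := legendreMoment_rec j m
          have hj : (j : ℝ) + 2 ≠ 0 := by positivity
          simp only [Nat.add_sub_cancel] at h ⊢
          push_cast at h ⊢
          apply mul_left_cancel₀ hj
          linear_combination (-(m : ℝ) - 1) * hr - (j + 1) * h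
    have h1 := ih k (by omega) (m + 1)
    have hr := legendreMoment_rec k m
    have hk : (k : ℝ) + 2 ≠ 0 := by positivity
    simp only [Nat.add_sub_cancel] at h1
    push_cast at h1 ⊢
    apply mul_left_cancel₀ hk
    linear_combination ((m : ℝ) + k + 3) * hr + (2 * k + 3) * h1 + (k + 2) * key

theorem legendreMoment_eq_zero {n m : ℕ} (h : m < n) : legendreMoment n m = 0 := by
  induction m generalizing n with
  | zero =>
    obtain ⟨n, rfl⟩ := Nat.exists_eq_succ_of_ne_zero h.ne'
    have hs := legendreMoment_step n 0
    have : (n : ℝ) + 2 ≠ 0 := by positivity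
    simpa [this] using hs
  | succ m ih =>
    obtain ⟨n, rfl⟩ := Nat.exists_eq_succ_of_ne_zero (by omega : n ≠ 0)
    have hs := legendreMoment_step n (m + 1)
    rw [Nat.add_sub_cancel, ih (by omega), mul_zero] at hs
    refine (mul_eq_zero.mp hs).resolve_left ?_
    positivity

theorem legendre_orthogonal {n : ℕ} {p : ℝ[X]} (hp : p.degree < (n : WithBot ℕ)) :
    ∫ x in (-1 : ℝ)..1, (legendre n).eval x * p.eval x = 0 := by
  rcases eq_or_ne p 0 with rfl | hp0
  · simp
  have hn : p.natDegree < n := (natDegree_lt_iff_degree_lt hp0).mpr hp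
  simp only [eval_eq_sum_range (p := p), Finset.mul_sum]
  rw [intervalIntegral.integral_finsetSum]
  · refine Finset.sum_eq_zero fun i hi => ?_
    have hi' : i < n := by
      have := Finset.mem_range.mp hi
      omega
    have h := legendreMoment_eq_zero hi'
    unfold legendreMoment at h
    simp only [mul_left_comm _ (p.coeff i)]
    rw [intervalIntegral.integral_const_mul, h, mul_zero]
  · intro i _
    exact Continuous.intervalIntegrable (by fun_prop) _ _

theorem eq_zero_of_integral_sq {r : ℝ[X]}
    (h : ∫ x in (-1 : ℝ)..1, r.eval x * r.eval x = 0) : r = 0 := by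
  by_contra hr
  have hex : ∃ c ∈ Set.Icc (-1 : ℝ) 1, r.eval c ≠ 0 := by
    by_contra! hall
    exact hr (eq_zero_of_infinite_isRoot r
      ((Set.Icc_infinite (by norm_num : (-1 : ℝ) < 1)).mono fun x hx => hall x hx))
  obtain ⟨c, hc, hrc⟩ := hex
  have := intervalIntegral.integral_pos (f := fun x => r.eval x * r.eval x)
    (by norm_num : (-1 : ℝ) < 1) (Continuous.continuousOn (by fun_prop))
    (fun x _ => mul_self_nonneg _) ⟨c, hc, mul_self_pos.mpr hrc⟩
  exact this.ne' h

theorem eq_legendre_combination (k : ℕ) (q : ℝ[X])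
    (hdeg : q.degree ≤ ((k + 1 : ℕ) : WithBot ℕ))
    (horth : ∀ p : ℝ[X], p.degree < (k : WithBot ℕ) →
      ∫ x in (-1 : ℝ)..1, q.eval x * p.eval x = 0) :
    ∃ a b : ℝ, q = C a * legendre (k + 1) + C b * legendre k := by
  have hA := (legendre_coeff_pos (k + 1)).ne'
  have hB := (legendre_coeff_pos k).ne'
  -- `a` and `b` are chosen to cancel the coefficients of `X ^ (k + 1)` and `X ^ k` in turn.
  obtain ⟨a, ha⟩ : ∃ a : ℝ, a * (legendre (k + 1)).coeff (k + 1) = q.coeff (k + 1) :=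
    ⟨_, div_mul_cancel₀ _ hA⟩
  obtain ⟨b, hb⟩ : ∃ b : ℝ, b * (legendre k).coeff k =
      q.coeff k - a * (legendre (k + 1)).coeff k := ⟨_, div_mul_cancel₀ _ hB⟩
  refine ⟨a, b, ?_⟩
  obtain ⟨r, hr⟩ : ∃ r : ℝ[X], r = q - C a * legendre (k + 1) - C b * legendre k := ⟨_, rfl⟩
  have hrdeg : r.degree < (k : WithBot ℕ) := by
    rw [degree_lt_iff_coeff_zero]
    intro m hm
    have h0 := legendre_natDegree_le k
    have h1 := legendre_natDegree_le (k + 1)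
    simp only [hr, coeff_sub, coeff_C_mul]
    rcases hm.eq_or_lt with rfl | hm
    · rw [hb]; ring
    · rw [coeff_eq_zero_of_natDegree_lt (p := legendre k) (by omega)]
      rcases (Nat.succ_le_of_lt hm).eq_or_lt with rfl | hm
      · rw [Nat.succ_eq_add_one, ha]; ring
      · rw [coeff_eq_zero_of_natDegree_lt (p := legendre (k + 1)) (by omega),
          coeff_eq_zero_of_degree_lt (hdeg.trans_lt (by exact_mod_cast hm))]
        ring
  have hrr : ∫ x in (-1 : ℝ)..1, r.eval x * r.eval x = 0 := by
    have hfun : ∀ x : ℝ, r.eval x * r.eval x = q.eval x * r.eval x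
        - a * ((legendre (k + 1)).eval x * r.eval x) - b * ((legendre k).eval x * r.eval x) := by
      intro x
      have := congrArg (eval x) hr
      simp only [eval_sub, eval_mul, eval_C] at this
      linear_combination r.eval x * this
    have hlt : r.degree < ((k + 1 : ℕ) : WithBot ℕ) :=
      hrdeg.trans (by exact_mod_cast Nat.lt_succ_self k)
    simp only [hfun]
    rw [intervalIntegral.integral_sub (Continuous.intervalIntegrable (by fun_prop) _ _)
        (Continuous.intervalIntegrable (by fun_prop) _ _),
      intervalIntegral.integral_sub (Continuous.intervalIntegrable (by fun_prop) _ _)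
        (Continuous.intervalIntegrable (by fun_prop) _ _),
      intervalIntegral.integral_const_mul, intervalIntegral.integral_const_mul,
      horth r hrdeg, legendre_orthogonal hrdeg, legendre_orthogonal hlt]
    ring
  rw [eq_zero_of_integral_sq hrr] at hr
  linear_combination -hr

/-- A polynomial of degree at most `k+1` which is `L²([-1,1])`-orthogonal to all polynomials
of degree at most `k-1` (a vacuous condition for `k = 0`, since `p.degree < 0` forces `p = 0`)
and vanishes at `1` (resp. `-1`) is a scalar multiple of the right (resp. left) Radau
polynomial `L_{k+1} ∓ L_k`. -/
theorem radau_characterization (k : ℕ) (q : Polynomial ℝ)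
    (hdeg : q.degree ≤ ((k + 1 : ℕ) : WithBot ℕ))
    (horth : ∀ p : Polynomial ℝ, p.degree < (k : WithBot ℕ) →
      ∫ x in (-1 : ℝ)..1, q.eval x * p.eval x = 0) :
    (q.eval (1 : ℝ) = 0 → ∃ c : ℝ, q = Polynomial.C c * (legendre (k + 1) - legendre k)) ∧
    (q.eval (-1 : ℝ) = 0 → ∃ c : ℝ, q = Polynomial.C c * (legendre (k + 1) + legendre k)) := by
  obtain ⟨a, b, rfl⟩ := eq_legendre_combination k q hdeg horth
  constructor
  · intro h
    simp only [eval_add, eval_mul, eval_C, legendre_eval_one, mul_one] at h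
    obtain rfl : b = -a := by linarith
    exact ⟨a, by rw [C_neg]; ring⟩
  · intro h
    simp only [eval_add, eval_mul, eval_C, legendre_eval_neg_one] at h
    have hpow : ((-1 : ℝ)) ^ k ≠ 0 := pow_ne_zero _ (by norm_num)
    obtain rfl : b = a := by
      apply mul_right_cancel₀ hpow
      linear_combination h
    exact ⟨b, by ring⟩
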